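/- Let P = (x̂, ŷ) be a proper rational parametrization of the curve E(x,y) = 0. If a function φ is analytic in a neighborhood of a point x* ∈ ℂ with x* ≠ x̂(∞) and satisfies E(x, φ(x)) = 0 for all x in that neighborhood, then there exists a unique s* ∈ ℂ such that x̂(s*) = x* and ŷ = φ∘x̂ holds in a neighborhood of s*. -/

import Mathlib

open Polynomial

/-- A rational map of the Riemann sphere, given by a pair of coprime polynomials. -/
structure RationalMap where
  num : Polynomial ℂ
  den : Polynomial ℂ
  den_ne_zero : den ≠ 0
  coprime : IsCoprime num den

namespace RationalMap

/-- The finite-valued function `s ↦ num(s)/den(s)` (junk value `0` at poles). -/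
noncomputable def toFun (f : RationalMap) (s : ℂ) : ℂ := f.num.eval s / f.den.eval s

/-- Evaluation as a map to the Riemann sphere `ℂ ∪ {∞}`. -/
noncomputable def eval (f : RationalMap) (s : ℂ) : OnePoint ℂ :=
  if f.den.eval s = 0 then OnePoint.infty else ((f.toFun s : ℂ) : OnePoint ℂ)

/-- The value of the rational map at the point `∞` of the Riemann sphere. -/
noncomputable def evalInf (f : RationalMap) : OnePoint ℂ :=
  if f.den.degree < f.num.degree then OnePoint.infty
  else ((f.num.coeff f.den.natDegree / f.den.leadingCoeff : ℂ) : OnePoint ℂ)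

/-- A rational map is real if (after clearing a common constant) its numerator and
denominator can be written with real coefficients. -/
def IsReal (f : RationalMap) : Prop :=
  ∃ (c : ℂ) (P Q : Polynomial ℝ), c ≠ 0 ∧
    c • f.num = P.map (algebraMap ℝ ℂ) ∧ c • f.den = Q.map (algebraMap ℝ ℂ)

end RationalMap

/-- Evaluation of a bivariate polynomial `E` at `(x,y)`. -/
noncomputable def evalE (E : MvPolynomial (Fin 2) ℂ) (x y : ℂ) : ℂ :=
  MvPolynomial.eval ![x, y] E

/-- `(X,Y)` is a rational parametrization of the curve `E(x,y) = 0`: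
`E(X(s), Y(s)) = 0` for all but finitely many `s ∈ ℂ`. -/
def IsParametrization (E : MvPolynomial (Fin 2) ℂ) (X Y : RationalMap) : Prop :=
  Set.Finite {s : ℂ |
    ¬ (X.den.eval s ≠ 0 ∧ Y.den.eval s ≠ 0 ∧ evalE E (X.toFun s) (Y.toFun s) = 0)}

/-- The parametrization `(X,Y)` is proper: for all but finitely many points `(x,y)` on the
curve, the equation `(X(s), Y(s)) = (x,y)` has exactly one solution `s ∈ ℂ`. -/
def IsProper (E : MvPolynomial (Fin 2) ℂ) (X Y : RationalMap) : Prop :=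
  Set.Finite {P : ℂ × ℂ | evalE E P.1 P.2 = 0 ∧
    ¬ ∃! s : ℂ, X.eval s = ((P.1 : ℂ) : OnePoint ℂ) ∧ Y.eval s = ((P.2 : ℂ) : OnePoint ℂ)}

/-- `s` is a critical point of the parametrization `(X,Y)` if `X′(s) = 0` (as a rational
function, i.e. the numerator `num′·den − num·den′` of the derivative vanishes at `s`) or
`Y(s) = ∞`. -/
def IsCriticalPt (X Y : RationalMap) (s : ℂ) : Prop :=
  (X.num.derivative * X.den - X.num * X.den.derivative).eval s = 0 ∨ Y.den.eval s = 0

/-!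
A rational map `f` extends to a continuous self-map of the Riemann sphere because homogeneous
coordinates `[u : v]` depend continuously on `(u, v) ≠ (0, 0)`; near `s = ∞` one evaluates the
reversed polynomials at `s⁻¹`.

Existence: points `x → x*` have parameters `s` with `X s = x`, `Y s = φ x`. Since `X ∞ ≠ x*`, these
parameters stay in a compact part of `ℂ`, hence cluster at some `s*` with `X s* = x*`. Thus
`Y = φ ∘ X` holds at points accumulating at `s*`, and by the identity theorem it holds near `s*`.

Uniqueness: near each solution `s*` the map `X` is open, so two solutions would give two distinct
parameters for every point `(x, φ x)` with `x` close to `x*`.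
-/

open Filter Topology

section Topology

variable {α β : Type*} [TopologicalSpace α] [TopologicalSpace β]

theorem exists_frequently_nhdsNE_of_tendsto_cocompact [T2Space β] {g : α → β} {b z : β}
    {p : α → Prop} (hg : Continuous g) (hb : Tendsto g (cocompact α) (𝓝 b)) (hbz : b ≠ z)
    (hp : ∃ᶠ y in 𝓝[≠] z, ∃ s, g s = y ∧ p s) :
    ∃ s, g s = z ∧ ∃ᶠ t in 𝓝[≠] s, p t := by
  have : (comap g (𝓝[≠] z) ⊓ 𝓟 {s | p s}).NeBot :=
    frequently_mem_iff_neBot.mp (frequently_comap.mpr hp)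
  obtain ⟨G, hG⟩ := (comap g (𝓝[≠] z) ⊓ 𝓟 {s | p s}).exists_ultrafilter_le
  have hGz : Tendsto g G (𝓝[≠] z) := tendsto_iff_comap.mpr (hG.trans inf_le_left)
  have hGz' : Tendsto g G (𝓝 z) := hGz.mono_right nhdsWithin_le_nhds
  have hGp : ∀ᶠ s in (G : Filter α), p s := le_principal_iff.mp (hG.trans inf_le_right)
  have hnot_le : ¬ (G : Filter α) ≤ cocompact α :=
    fun hle => hbz (tendsto_nhds_unique (hb.mono_left hle) hGz')
  obtain ⟨K, hK, hKG⟩ : ∃ K, IsCompact K ∧ K ∈ G := by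
    simpa only [hasBasis_cocompact.ge_iff, not_forall, exists_prop, Ultrafilter.mem_coe,
      Ultrafilter.compl_mem_iff_notMem, not_not] using hnot_le
  obtain ⟨s, -, hs⟩ := hK.ultrafilter_le_nhds' G hKG
  have hgs : g s = z := tendsto_nhds_unique ((hg.tendsto s).mono_left hs) hGz'
  have hne : ∀ᶠ t in (G : Filter α), t ≠ s := by
    filter_upwards [hGz self_mem_nhdsWithin] with t ht hts
    exact ht (hts ▸ hgs)
  exact ⟨s, hgs, hGp.frequently.filter_mono (le_inf hs (le_principal_iff.mpr hne))⟩

theorem eq_of_nhds_le_map_nhds [T2Space α] {g : α → β} {z : β} {p : α → Prop} {s₁ s₂ : α}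
    (hg₁ : 𝓝 z ≤ map g (𝓝 s₁)) (hg₂ : 𝓝 z ≤ map g (𝓝 s₂))
    (hp₁ : ∀ᶠ t in 𝓝 s₁, p t) (hp₂ : ∀ᶠ t in 𝓝 s₂, p t)
    (hinj : ∃ᶠ y in 𝓝 z, {s | g s = y ∧ p s}.Subsingleton) : s₁ = s₂ := by
  by_contra hne
  obtain ⟨U₁, hU₁, U₂, hU₂, hdisj⟩ := Filter.disjoint_iff.mp (disjoint_nhds_nhds.mpr hne)
  have himage₁ : g '' (U₁ ∩ {t | p t}) ∈ 𝓝 z := hg₁ (image_mem_map (inter_mem hU₁ hp₁))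
  have himage₂ : g '' (U₂ ∩ {t | p t}) ∈ 𝓝 z := hg₂ (image_mem_map (inter_mem hU₂ hp₂))
  obtain ⟨y, hy, ⟨t₁, ⟨htU₁, hpt₁⟩, hgt₁⟩, t₂, ⟨htU₂, hpt₂⟩, hgt₂⟩ :=
    (hinj.and_eventually ((eventually_mem_set.mpr himage₁).and himage₂)).exists
  exact hdisj.ne_of_mem htU₁ htU₂ (hy ⟨hgt₁, hpt₁⟩ ⟨hgt₂, hpt₂⟩)

end Topology

section ProjectiveCoord

variable {K : Type*} [DecidableEq K]

/-- The point of the projective line `K ∪ {∞}` with homogeneous coordinates `[u : v]`, with the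
junk value `∞` at `u = v = 0`. It lets the continuity of rational maps be proved uniformly at
ordinary points, at poles and at infinity. -/
def projectiveCoord [DivisionRing K] (u v : K) : OnePoint K :=
  if v = 0 then OnePoint.infty else ((u / v : K) : OnePoint K)

theorem projectiveCoord_mul_right [Field K] {c : K} (hc : c ≠ 0) (u v : K) :
    projectiveCoord (u * c) (v * c) = projectiveCoord u v := by
  simp only [projectiveCoord, mul_eq_zero, hc, or_false, mul_div_mul_right u v hc]

theorem tendsto_projectiveCoord [NormedField K] [ProperSpace K] {ι : Type*} {l : Filter ι}
    {u v : ι → K} {u₀ v₀ : K} (hu : Tendsto u l (𝓝 u₀)) (hv : Tendsto v l (𝓝 v₀))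
    (h : u₀ ≠ 0 ∨ v₀ ≠ 0) :
    Tendsto (fun i => projectiveCoord (u i) (v i)) l (𝓝 (projectiveCoord u₀ v₀)) := by
  by_cases hv₀ : v₀ = 0
  · have hu₀ : u₀ ≠ 0 := h.resolve_right (not_not.mpr hv₀)
    have hinv : Tendsto (fun i => v i / u i) l (𝓝 0) := by
      simpa only [hv₀, zero_div, Pi.div_def] using hv.div hu hu₀
    have hquot : Tendsto (fun i => u i / v i) (l ⊓ 𝓟 {i | v i ≠ 0}) (Bornology.cobounded K) := by
      have hne : ∀ᶠ i in l ⊓ 𝓟 {i | v i ≠ 0}, v i / u i ≠ 0 := by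
        filter_upwards [(hu.eventually_ne hu₀).filter_mono inf_le_left,
          mem_inf_of_right (mem_principal_self _)] with i hui hvi using div_ne_zero hvi hui
      simpa only [Function.comp_def, inv_div] using tendsto_inv₀_nhdsNE_zero.comp
        (tendsto_nhdsWithin_iff.mpr ⟨hinv.mono_left inf_le_left, hne⟩)
    simp only [projectiveCoord, hv₀, if_true]
    refine Tendsto.if tendsto_const_nhds (OnePoint.tendsto_coe_infty.comp ?_)
    rwa [coclosedCompact_eq_cocompact, ← Metric.cobounded_eq_cocompact]
  · have hquot : Tendsto (fun i => ((u i / v i : K) : OnePoint K)) l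
        (𝓝 ((u₀ / v₀ : K) : OnePoint K)) :=
      (OnePoint.continuous_coe.tendsto _).comp (hu.div hv hv₀)
    simp only [projectiveCoord, hv₀, if_false]
    refine hquot.congr' ?_
    filter_upwards [hv.eventually_ne hv₀] with i hi
    rw [if_neg hi]

end ProjectiveCoord

theorem eval_eq_eval_reflect_inv_mul_pow {K : Type*} [Field K] {p : K[X]} {N : ℕ}
    (hp : p.natDegree ≤ N) {s : K} (hs : s ≠ 0) :
    p.eval s = (p.reflect N).eval s⁻¹ * s ^ N := by
  let := invertibleOfNonzero hs
  simpa only [eval₂_id, invOf_eq_inv] using (eval₂_reflect_mul_pow (RingHom.id K) s N p hp).symm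

namespace RationalMap

theorem eval_eq_projectiveCoord (f : RationalMap) (s : ℂ) :
    f.eval s = projectiveCoord (f.num.eval s) (f.den.eval s) := rfl

theorem num_eval_ne_zero_or_den_eval_ne_zero (f : RationalMap) (s : ℂ) :
    f.num.eval s ≠ 0 ∨ f.den.eval s ≠ 0 := by
  by_contra! h
  obtain ⟨u, v, huv⟩ := f.coprime
  simpa [h.1, h.2] using congrArg (Polynomial.eval s) huv

theorem eval_eq_coe_iff (f : RationalMap) (s a : ℂ) :
    f.eval s = (a : OnePoint ℂ) ↔ f.den.eval s ≠ 0 ∧ f.toFun s = a := by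
  unfold eval
  split_ifs with h <;> simp [h]

theorem eval_eq_coe_iff_num_eval_eq (f : RationalMap) (s a : ℂ) :
    f.eval s = (a : OnePoint ℂ) ↔ f.num.eval s = a * f.den.eval s := by
  rw [eval_eq_coe_iff, toFun]
  constructor
  · rintro ⟨hden, ha⟩
    exact (div_eq_iff hden).mp ha
  · intro ha
    have hden : f.den.eval s ≠ 0 := fun h0 =>
      (f.num_eval_ne_zero_or_den_eval_ne_zero s).elim (· (by rw [ha, h0, mul_zero])) (· h0)
    exact ⟨hden, (div_eq_iff hden).mpr ha⟩

theorem continuous_eval (f : RationalMap) : Continuous f.eval :=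
  continuous_iff_continuousAt.mpr fun s =>
    tendsto_projectiveCoord (f.num.continuous.tendsto s) (f.den.continuous.tendsto s)
      (f.num_eval_ne_zero_or_den_eval_ne_zero s)

theorem num_coeff_ne_zero_or_den_coeff_ne_zero (f : RationalMap) :
    f.num.coeff (max f.num.natDegree f.den.natDegree) ≠ 0 ∨
      f.den.coeff (max f.num.natDegree f.den.natDegree) ≠ 0 := by
  rcases le_or_gt f.num.natDegree f.den.natDegree with h | h
  · right
    rw [max_eq_right h]
    exact leadingCoeff_ne_zero.mpr f.den_ne_zero
  · left
    rw [max_eq_left h.le]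
    exact leadingCoeff_ne_zero.mpr (ne_zero_of_natDegree_gt h)

theorem evalInf_eq_projectiveCoord (f : RationalMap) :
    f.evalInf = projectiveCoord (f.num.coeff (max f.num.natDegree f.den.natDegree))
      (f.den.coeff (max f.num.natDegree f.den.natDegree)) := by
  set N := max f.num.natDegree f.den.natDegree
  unfold evalInf projectiveCoord
  by_cases hdeg : f.den.degree < f.num.degree
  · have hden : f.den.coeff N = 0 := by
      refine coeff_eq_zero_of_degree_lt (hdeg.trans_le (degree_le_natDegree.trans ?_))
      exact_mod_cast le_max_left _ _
    rw [if_pos hdeg, if_pos hden]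
  · have hNden : N = f.den.natDegree :=
      max_eq_right (natDegree_le_natDegree (not_lt.mp hdeg))
    rw [if_neg hdeg, hNden, coeff_natDegree, if_neg (leadingCoeff_ne_zero.mpr f.den_ne_zero)]

theorem tendsto_eval_cobounded (f : RationalMap) :
    Tendsto f.eval (Bornology.cobounded ℂ) (𝓝 f.evalInf) := by
  set N := max f.num.natDegree f.den.natDegree
  have hreflect (p : ℂ[X]) :
      Tendsto (fun s : ℂ => (p.reflect N).eval s⁻¹) (Bornology.cobounded ℂ) (𝓝 (p.coeff N)) := by
    have h := ((p.reflect N).continuous.tendsto 0).comp tendsto_inv₀_cobounded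
    rwa [← coeff_zero_eq_eval_zero, coeff_reflect, revAt_zero] at h
  rw [evalInf_eq_projectiveCoord]
  refine (tendsto_projectiveCoord (hreflect f.num) (hreflect f.den)
    f.num_coeff_ne_zero_or_den_coeff_ne_zero).congr' ?_
  filter_upwards [Bornology.eventually_ne_cobounded 0] with s hs
  rw [eval_eq_projectiveCoord, eval_eq_eval_reflect_inv_mul_pow (le_max_left _ _) hs,
    eval_eq_eval_reflect_inv_mul_pow (le_max_right _ _) hs,
    projectiveCoord_mul_right (pow_ne_zero N hs)]

theorem analyticAt_toFun (f : RationalMap) {s : ℂ} (hs : f.den.eval s ≠ 0) :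
    AnalyticAt ℂ f.toFun s :=
  (AnalyticOnNhd.eval_polynomial f.num s trivial).div
    (AnalyticOnNhd.eval_polynomial f.den s trivial) hs

theorem nhds_le_map_eval_nhds (f : RationalMap) {s t a : ℂ} (hs : f.eval s = (a : OnePoint ℂ))
    (ht : f.eval t ≠ (a : OnePoint ℂ)) : 𝓝 (a : OnePoint ℂ) ≤ map f.eval (𝓝 s) := by
  obtain ⟨hden, ha⟩ := (f.eval_eq_coe_iff s a).mp hs
  have heval : f.eval =ᶠ[𝓝 s] fun z => (f.toFun z : OnePoint ℂ) := by
    filter_upwards [f.den.continuous.continuousAt.eventually_ne hden] with z hz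
    exact (f.eval_eq_coe_iff z _).mpr ⟨hz, rfl⟩
  have hnonconst : ¬ ∀ᶠ z in 𝓝 s, f.toFun z = f.toFun s := by
    intro hconst
    refine ht ((f.eval_eq_coe_iff_num_eval_eq t a).mpr ?_)
    have hnum : f.num = C a * f.den := by
      refine eq_of_infinite_eval_eq _ _ (infinite_of_mem_nhds s ?_)
      filter_upwards [hconst, heval] with z hz hfz
      rw [hz, ha, eval_eq_coe_iff_num_eval_eq] at hfz
      rw [eval_mul, eval_C, hfz]
    rw [hnum, eval_mul, eval_C]
  have hopen : 𝓝 a ≤ map f.toFun (𝓝 s) :=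
    ha ▸ (f.analyticAt_toFun hden).eventually_constant_or_nhds_le_map_nhds.resolve_left hnonconst
  calc 𝓝 (a : OnePoint ℂ) = map (↑) (𝓝 a) := OnePoint.nhds_coe_eq a
    _ ≤ map (↑) (map f.toFun (𝓝 s)) := map_mono hopen
    _ = map f.eval (𝓝 s) := by rw [Filter.map_map, map_congr heval]; rfl

theorem eventually_eval_eq_of_frequently (f : RationalMap) {ψ : ℂ → ℂ} {s : ℂ}
    (hψ : AnalyticAt ℂ ψ s) (hfreq : ∃ᶠ t in 𝓝[≠] s, f.eval t = (ψ t : OnePoint ℂ)) :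
    ∀ᶠ t in 𝓝 s, f.eval t = (ψ t : OnePoint ℂ) := by
  simp only [eval_eq_coe_iff_num_eval_eq] at hfreq ⊢
  have hnum : AnalyticAt ℂ f.num.eval s := AnalyticOnNhd.eval_polynomial f.num s trivial
  have hden : AnalyticAt ℂ f.den.eval s := AnalyticOnNhd.eval_polynomial f.den s trivial
  exact (hnum.frequently_eq_iff_eventually_eq (hψ.mul hden)).mp hfreq

end RationalMap

theorem IsProper.eventually_existsUnique {E : MvPolynomial (Fin 2) ℂ} {X Y : RationalMap}
    (hprop : IsProper E X Y) {φ : ℂ → ℂ} {a : ℂ} (hφ : ∀ᶠ x in 𝓝 a, evalE E x (φ x) = 0) :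
    ∀ᶠ x : ℂ in 𝓝[≠] a, ∃! s : ℂ, X.eval s = (x : OnePoint ℂ) ∧ Y.eval s = (φ x : OnePoint ℂ) := by
  filter_upwards [nhdsNE_le_cofinite a (hprop.image Prod.fst).compl_mem_cofinite,
    hφ.filter_mono nhdsWithin_le_nhds] with x hx hxφ
  by_contra hnot
  exact hx ⟨(x, φ x), ⟨hxφ, hnot⟩, rfl⟩

theorem frequently_existsUnique_eval_eq_comp {X Y : RationalMap} {φ : ℂ → ℂ} {a : ℂ}
    (h : ∃ᶠ x : ℂ in 𝓝[≠] a, ∃! s : ℂ,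
      X.eval s = (x : OnePoint ℂ) ∧ Y.eval s = (φ x : OnePoint ℂ)) :
    ∃ᶠ z in 𝓝[≠] (a : OnePoint ℂ), ∃! s : ℂ,
      X.eval s = z ∧ Y.eval s = (φ (X.toFun s) : OnePoint ℂ) := by
  have hcoe : Tendsto ((↑) : ℂ → OnePoint ℂ) (𝓝[≠] a) (𝓝[≠] (a : OnePoint ℂ)) :=
    OnePoint.continuous_coe.continuousWithinAt.tendsto_nhdsWithin
      fun _ hx => OnePoint.coe_injective.ne hx
  refine hcoe.frequently (h.mono fun x hx => ?_)
  refine (existsUnique_congr fun s => and_congr_right fun hs => ?_).mp hx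
  rw [((X.eval_eq_coe_iff s x).mp hs).2]

theorem statement15_general (X Y : RationalMap) (φ : ℂ → ℂ) (xstar : ℂ)
    (hinf : X.evalInf ≠ (xstar : OnePoint ℂ)) (hφ : AnalyticAt ℂ φ xstar)
    (huniq : ∃ᶠ x : ℂ in 𝓝[≠] xstar, ∃! s : ℂ,
      X.eval s = (x : OnePoint ℂ) ∧ Y.eval s = (φ x : OnePoint ℂ)) :
    ∃! s : ℂ, X.eval s = (xstar : OnePoint ℂ) ∧
      ∀ᶠ t in 𝓝 s, Y.eval t = (φ (X.toFun t) : OnePoint ℂ) := by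
  have hfiber := frequently_existsUnique_eval_eq_comp huniq
  refine existsUnique_of_exists_of_unique ?_ ?_
  · obtain ⟨s, hs, hfreq⟩ := exists_frequently_nhdsNE_of_tendsto_cocompact X.continuous_eval
      (Metric.cobounded_eq_cocompact (α := ℂ) ▸ X.tendsto_eval_cobounded) hinf
      (hfiber.mono fun _ h => h.exists)
    obtain ⟨hden, hXs⟩ := (X.eval_eq_coe_iff s xstar).mp hs
    have hφX : AnalyticAt ℂ (fun t => φ (X.toFun t)) s :=
      AnalyticAt.comp (hXs ▸ hφ) (X.analyticAt_toFun hden)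
    exact ⟨s, hs, Y.eventually_eval_eq_of_frequently hφX hfreq⟩
  · rintro s₁ s₂ ⟨hs₁, hY₁⟩ ⟨hs₂, hY₂⟩
    obtain ⟨_, ⟨t, ⟨rfl, -⟩, -⟩, ht⟩ := (hfiber.and_eventually self_mem_nhdsWithin).exists
    exact eq_of_nhds_le_map_nhds (X.nhds_le_map_eval_nhds hs₁ ht) (X.nhds_le_map_eval_nhds hs₂ ht)
      hY₁ hY₂ ((hfiber.filter_mono nhdsWithin_le_nhds).mono fun _ h _ h₁ _ h₂ => h.unique h₁ h₂)

/-- Lemma `proper para` (i): if `(X,Y)` is a proper rational parametrization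
of the irreducible curve `E = 0` and `φ` is analytic near `x* ≠ X(∞)` with `E(x,φ(x)) = 0`
near `x*`, then there is a unique `s* ∈ ℂ` such that `(P, s*)` parametrizes `φ` locally at
`x*`, i.e. `X(s*) = x*` and `Y = φ ∘ X` in a neighborhood of `s*`. -/
theorem statement15 (E : MvPolynomial (Fin 2) ℂ) (hE : Irreducible E)
    (X Y : RationalMap) (hpar : IsParametrization E X Y) (hprop : IsProper E X Y)
    (φ : ℂ → ℂ) (xstar : ℂ)
    (hinf : X.evalInf ≠ ((xstar : ℂ) : OnePoint ℂ))
    (hφ : AnalyticAt ℂ φ xstar)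
    (heq : ∀ᶠ x in nhds xstar, evalE E x (φ x) = 0) :
    ∃! s : ℂ, X.eval s = ((xstar : ℂ) : OnePoint ℂ) ∧
      ∀ᶠ t in nhds s, Y.eval t = ((φ (X.toFun t) : ℂ) : OnePoint ℂ) :=
  statement15_general X Y φ xstar hinf hφ (hprop.eventually_existsUnique heq).frequently
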